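/- Let e₀, e₁ denote the standard orthonormal basis of ℂ² and Φ± = (e₀ ⊗ e₀ ± e₁ ⊗ e₁)/√2 ∈ ℂ² ⊗ ℂ². Define Ξ = √(2/3) Φ⁺ ⊗ e₀ ⊗ e₀ + √(1/3) (e₁ ⊗ e₁) ⊗ e₁ ⊗ e₁ in (ℂ² ⊗ ℂ²) ⊗ ℂ² ⊗ ℂ² (slots RA, S, B). Then ⟨Φ⁻ ⊗ e₀ ⊗ e₀, Ξ⟩ = 0 and ⟨Φ⁻ ⊗ e₁ ⊗ e₀, Ξ⟩ = 0, and the contraction of Ξ against Φ⁻ in the RA slot equals −√(1/6) e₁ ⊗ e₁; in particular the B part of this contraction is the pure state e₁, so conditional on Ursula's outcome '−', Bob must have obtained outcome '1'. -/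

import Mathlib

open scoped TensorProduct

set_option synthInstance.maxHeartbeats 1000000
set_option maxHeartbeats 1000000

noncomputable section

/-- The qubit space `ℂ²`. -/
abbrev Q2 : Type := EuclideanSpace ℂ (Fin 2)

/-- The standard orthonormal basis `e₀, e₁` of `ℂ²`. -/
def e (i : Fin 2) : Q2 := EuclideanSpace.single i 1

/-- `√x` as a complex scalar. -/
def c (x : ℝ) : ℂ := (Real.sqrt x : ℂ)

/-- The linear functional `⟨φ| = ⟪φ, ·⟫` on an inner product space. -/
def bra {H : Type*} [NormedAddCommGroup H] [InnerProductSpace ℂ H] (φ : H) :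
    H →ₗ[ℂ] ℂ :=
  (innerSL ℂ φ).toLinearMap

/-- Contraction `(f ⊗ I) : H ⊗ M →ₗ M` of the first slot against a functional `f`. -/
def contractF {H M : Type*} [AddCommGroup H] [Module ℂ H] [AddCommGroup M]
    [Module ℂ M] (f : H →ₗ[ℂ] ℂ) : H ⊗[ℂ] M →ₗ[ℂ] M :=
  (TensorProduct.lid ℂ M).toLinearMap ∘ₗ TensorProduct.map f LinearMap.id

/-- Contraction `(⟨φ| ⊗ I) : H ⊗ M →ₗ M` against a vector `φ` in the first slot. -/
def contractFirst {H M : Type*} [NormedAddCommGroup H] [InnerProductSpace ℂ H]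
    [AddCommGroup M] [Module ℂ M] (φ : H) : H ⊗[ℂ] M →ₗ[ℂ] M :=
  contractF (bra φ)

/-- Contraction `(I ⊗ ⟨φ|) : M ⊗ H →ₗ M` against a vector `φ` in the last slot. -/
def contractLast {H M : Type*} [NormedAddCommGroup H] [InnerProductSpace ℂ H]
    [AddCommGroup M] [Module ℂ M] (φ : H) : M ⊗[ℂ] H →ₗ[ℂ] M :=
  (TensorProduct.rid ℂ M).toLinearMap ∘ₗ TensorProduct.map LinearMap.id (bra φ)

/-- The functional `f ⊗ g` on a binary tensor product. -/
def braT {H K : Type*} [AddCommGroup H] [Module ℂ H] [AddCommGroup K] [Module ℂ K]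
    (f : H →ₗ[ℂ] ℂ) (g : K →ₗ[ℂ] ℂ) : H ⊗[ℂ] K →ₗ[ℂ] ℂ :=
  LinearMap.mul' ℂ ℂ ∘ₗ TensorProduct.map f g

/-- The Bell state `Φ⁺ = (e₀ ⊗ e₀ + e₁ ⊗ e₁)/√2`. -/
def Φp : Q2 ⊗[ℂ] Q2 := (c 2)⁻¹ • (e 0 ⊗ₜ[ℂ] e 0 + e 1 ⊗ₜ[ℂ] e 1)

/-- The Bell state `Φ⁻ = (e₀ ⊗ e₀ − e₁ ⊗ e₁)/√2`. -/
def Φm : Q2 ⊗[ℂ] Q2 := (c 2)⁻¹ • (e 0 ⊗ₜ[ℂ] e 0 - e 1 ⊗ₜ[ℂ] e 1)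

/-- The functional `⟨Φ⁻| = (⟨e₀| ⊗ ⟨e₀| − ⟨e₁| ⊗ ⟨e₁|)/√2` on `ℂ² ⊗ ℂ²`
(the bra dual to `Φ⁻` with respect to the induced inner product). -/
def braΦm : Q2 ⊗[ℂ] Q2 →ₗ[ℂ] ℂ :=
  (c 2)⁻¹ • (braT (bra (e 0)) (bra (e 0)) - braT (bra (e 1)) (bra (e 1)))

/-- The state `Ξ` of the joint system (Alice together with qubit R, qubit S, Bob)
after the first three steps of the Frauchiger–Renner protocol, with slots
`RA, S, B` (associated as `RA ⊗ (S ⊗ B)`). -/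
def Ξ : (Q2 ⊗[ℂ] Q2) ⊗[ℂ] (Q2 ⊗[ℂ] Q2) :=
  c (2/3) • (Φp ⊗ₜ[ℂ] (e 0 ⊗ₜ[ℂ] e 0))
    + c (1/3) • ((e 1 ⊗ₜ[ℂ] e 1) ⊗ₜ[ℂ] (e 1 ⊗ₜ[ℂ] e 1))

/-!
The functional `⟨Φ⁻|` annihilates `Φ⁺`, so contracting `Ξ` against `Φ⁻` keeps only the summand of
amplitude `√(1/3)`, with the factor `⟨Φ⁻, e₁ ⊗ e₁⟩ = -1/√2`. What remains is a product whose `B`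
factor is `e₁`. Since `⟨Φ⁻| ⊗ ⟨a| ⊗ ⟨b|` may be evaluated by contracting the `RA` slot first, it
vanishes on `Ξ` as soon as `b ⟂ e₁`, whatever `a` is.
-/

section Contraction

variable {H K M : Type*} [AddCommGroup H] [Module ℂ H] [AddCommGroup K] [Module ℂ K]
  [AddCommGroup M] [Module ℂ M]

@[simp]
theorem braT_tmul (f : H →ₗ[ℂ] ℂ) (g : K →ₗ[ℂ] ℂ) (x : H) (y : K) :
    braT f g (x ⊗ₜ[ℂ] y) = f x * g y := by
  simp [braT]

@[simp]
theorem contractF_tmul (f : H →ₗ[ℂ] ℂ) (x : H) (y : M) :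
    contractF f (x ⊗ₜ[ℂ] y) = f x • y := by
  simp [contractF]

theorem braT_eq_comp_contractF (f : H →ₗ[ℂ] ℂ) (g : K →ₗ[ℂ] ℂ) :
    braT f g = g ∘ₗ contractF f :=
  TensorProduct.ext' fun x y ↦ by simp

theorem braT_braT_eq_zero_of_contractF_eq_tmul {f : H →ₗ[ℂ] ℂ} {z : H ⊗[ℂ] (K ⊗[ℂ] M)}
    {x : K} {y : M} (hz : contractF f z = x ⊗ₜ[ℂ] y) (g : K →ₗ[ℂ] ℂ) {h : M →ₗ[ℂ] ℂ}
    (hy : h y = 0) : braT f (braT g h) z = 0 := by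
  rw [braT_eq_comp_contractF, LinearMap.comp_apply, hz, braT_tmul, hy, mul_zero]

end Contraction

theorem e_apply (i j : Fin 2) : e i j = if j = i then 1 else 0 := by
  simp [e]

theorem e_ne_zero (i : Fin 2) : e i ≠ 0 := by
  simp [e]

@[simp]
theorem bra_e_apply (i : Fin 2) (x : Q2) : bra (e i) x = x i := by
  simp [bra, e, EuclideanSpace.inner_single_left]

theorem c_ne_zero {x : ℝ} (hx : 0 < x) : c x ≠ 0 :=
  Complex.ofReal_ne_zero.mpr (Real.sqrt_ne_zero'.mpr hx)

theorem c_div {x : ℝ} (hx : 0 ≤ x) (y : ℝ) : c (x / y) = c x / c y := by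
  rw [c, Real.sqrt_div hx, Complex.ofReal_div, c, c]

theorem braΦm_tmul (x y : Q2) : braΦm (x ⊗ₜ[ℂ] y) = (c 2)⁻¹ * (x 0 * y 0 - x 1 * y 1) := by
  simp [braΦm]

theorem braΦm_Φp : braΦm Φp = 0 := by
  simp [Φp, braΦm_tmul, e_apply]

theorem braΦm_e_one_tmul_e_one : braΦm (e 1 ⊗ₜ[ℂ] e 1) = -(c 2)⁻¹ := by
  simp [braΦm_tmul, e_apply]

theorem contractF_Ξ (f : Q2 ⊗[ℂ] Q2 →ₗ[ℂ] ℂ) :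
    contractF f Ξ = (c (2/3) * f Φp) • (e 0 ⊗ₜ[ℂ] e 0)
      + (c (1/3) * f (e 1 ⊗ₜ[ℂ] e 1)) • (e 1 ⊗ₜ[ℂ] e 1) := by
  simp only [Ξ, map_add, map_smul, contractF_tmul, smul_smul]

theorem contractF_braΦm_Ξ : contractF braΦm Ξ = (-(c (1/6))) • (e 1 ⊗ₜ[ℂ] e 1) := by
  have amplitude : c (1/3) * -(c 2)⁻¹ = -c (1/6) := by
    rw [mul_neg, ← div_eq_mul_inv, ← c_div (by norm_num)]
    norm_num
  rw [contractF_Ξ, braΦm_Φp, mul_zero, zero_smul, zero_add, braΦm_e_one_tmul_e_one, amplitude]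

/-- `Ξ` is orthogonal to `Φ⁻ ⊗ e₀ ⊗ e₀` and to `Φ⁻ ⊗ e₁ ⊗ e₀`, and
the contraction of `Ξ` against `Φ⁻` in the `RA` slot equals `−√(1/6) e₁ ⊗ e₁`;
in particular the `B` part of this contraction is the pure state `e₁`: conditional
on Ursula's outcome `−`, Bob must have obtained outcome `1`. -/
theorem frauchiger_renner_first_inference :
    braT braΦm (braT (bra (e 0)) (bra (e 0))) Ξ = 0 ∧
    braT braΦm (braT (bra (e 1)) (bra (e 0))) Ξ = 0 ∧
    contractF braΦm Ξ = (-(c (1/6))) • (e 1 ⊗ₜ[ℂ] e 1) ∧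
    (∃ χ : Q2, χ ≠ 0 ∧ contractF braΦm Ξ = χ ⊗ₜ[ℂ] e 1) := by
  have product_form : contractF braΦm Ξ = (-(c (1/6)) • e 1) ⊗ₜ[ℂ] e 1 := by
    rw [contractF_braΦm_Ξ, TensorProduct.smul_tmul']
  have e_zero_orthogonal : bra (e 0) (e 1) = 0 := by simp [e_apply]
  have amplitude_ne_zero : -(c (1/6)) ≠ 0 := neg_ne_zero.mpr (c_ne_zero (by norm_num))
  exact ⟨braT_braT_eq_zero_of_contractF_eq_tmul product_form _ e_zero_orthogonal,
    braT_braT_eq_zero_of_contractF_eq_tmul product_form _ e_zero_orthogonal,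
    contractF_braΦm_Ξ,
    -(c (1/6)) • e 1, smul_ne_zero amplitude_ne_zero (e_ne_zero 1), product_form⟩

end
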